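/- Let k ≥ 3 be an odd integer and let n be a positive integer with n ≡ 0 (mod 3(k-1)/2). Then h(n,k) ≤ n(3k-1)/12. -/

import Mathlib

/-!
Write `k = 2m + 1`. The extremal graph is a disjoint union of `t` blocks on `3m` vertices each, a
block being a central `K_m` joined by perfect matchings to two further copies of `K_m`. Outer
vertices have degree `m` and central ones `m + 1`, so a block has `m(3m + 1)/2` edges, which is the
claimed bound.

A non-decreasing path can pass from an outer layer to the centre but never back, so it meets at most
one outer layer and has at most `2m` vertices (`mp_blocks_le`). An added edge raises the degrees of
its two ends by one, and then some non-decreasing path has at least `2m + 1` vertices. Two centres: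
outer layer, centre, new edge (`le_mp_center`). Two outer layers of one block: outer layer, new
edge, centre (`le_mp_same_block`). In the remaining cases an outer end `u`, now of degree `m + 1`,
can be visited after the other outer layer and the centre of its block, and be followed by the other
end (`le_mp_outer`).

Degree monotone paths are handled as duplicate-free lists, `le_mp` and `mp_le`; the graph is carried
over to `Fin n` along a bijection by `kSaturated_comap`.
-/

open SimpleGraph

variable {V : Type*}

/-- The degree of a vertex `v`: the number of neighbours of `v`. -/
noncomputable def gdeg (G : SimpleGraph V) (v : V) : ℕ := (G.neighborSet v).ncard

/-- A walk is degree monotone if the sequence of degrees of the vertices in the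
order in which they appear on the walk is monotone (non-decreasing or non-increasing). -/
def IsDegMonotone (G : SimpleGraph V) {u v : V} (p : G.Walk u v) : Prop :=
  (p.support.map (gdeg G)).Chain' (· ≤ ·) ∨ (p.support.map (gdeg G)).Chain' (· ≥ ·)

/-- `mp G` is the maximum number of vertices of a degree monotone path in `G`. -/
noncomputable def mp (G : SimpleGraph V) : ℕ :=
  sSup {n | ∃ (u v : V) (p : G.Walk u v), p.IsPath ∧ IsDegMonotone G p ∧ p.support.length = n}

/-- The graph obtained from `G` by adding the edge `uv`. -/
def addEdge (G : SimpleGraph V) (u v : V) : SimpleGraph V :=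
  G ⊔ fromEdgeSet {s(u, v)}

/-- `G` is saturated if adding any edge between non-adjacent vertices increases `mp`. -/
def Saturated (G : SimpleGraph V) : Prop :=
  ∀ u v : V, u ≠ v → ¬ G.Adj u v → mp G < mp (addEdge G u v)

/-- `G` is `k`-saturated if `mp G < k` and adding any edge between non-adjacent
vertices creates a degree monotone path on at least `k` vertices. -/
def KSaturated (k : ℕ) (G : SimpleGraph V) : Prop :=
  mp G < k ∧ ∀ u v : V, u ≠ v → ¬ G.Adj u v → k ≤ mp (addEdge G u v)

/-- `hSat n k` is the minimum number of edges of a `k`-saturated graph on `n` vertices. -/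
noncomputable def hSat (n k : ℕ) : ℕ :=
  sInf {m | ∃ G : SimpleGraph (Fin n), KSaturated k G ∧ G.edgeSet.ncard = m}


/-! ### Degree monotone paths as lists -/

/-- One step of a non-decreasing degree monotone path of `G`. -/
def Step (G : SimpleGraph V) (x y : V) : Prop := G.Adj x y ∧ gdeg G x ≤ gdeg G y

/-- A duplicate-free list whose consecutive entries form steps is a degree monotone path. -/
lemma le_mp [Fintype V] {G : SimpleGraph V} {l : List V} (hl : l.Nodup)
    (hc : l.IsChain (Step G)) : l.length ≤ mp G := by
  rcases eq_or_ne l [] with rfl | hne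
  · simp
  have hadj : l.IsChain G.Adj := hc.imp fun _ _ h => h.1
  refine le_csSup ⟨Fintype.card V, ?_⟩
    ⟨_, _, Walk.ofSupport l hne hadj, ?_, Or.inl ?_, ?_⟩
  · rintro _ ⟨u, v, p, hp, -, rfl⟩
    exact hp.support_nodup.length_le_card
  · rw [Walk.isPath_def, Walk.support_ofSupport]
    exact hl
  · rw [Walk.support_ofSupport]
    exact (List.isChain_map _).2 (hc.imp fun _ _ h => h.2)
  · rw [Walk.support_ofSupport]

lemma isChain_and {R S : V → V → Prop} {l : List V} (hR : l.IsChain R) (hS : l.IsChain S) :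
    l.IsChain fun x y => R x y ∧ S x y := by
  induction hR with grind

/-- Up to reversal every degree monotone path is non-decreasing, so only such paths need to be
bounded. -/
lemma mp_le {G : SimpleGraph V} {N : ℕ}
    (h : ∀ l : List V, l.Nodup → l.IsChain (Step G) → l.length ≤ N) : mp G ≤ N := by
  refine csSup_le' ?_
  rintro _ ⟨u, v, p, hp, hm | hm, rfl⟩
  · refine h _ hp.support_nodup ?_
    exact isChain_and p.isChain_adj_support ((List.isChain_map _).1 hm)
  · rw [← List.length_reverse]
    refine h _ (List.nodup_reverse.2 hp.support_nodup) (List.isChain_reverse.2 ?_)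
    exact isChain_and (p.isChain_adj_support.imp fun _ _ h => h.symm) ((List.isChain_map _).1 hm)

lemma gdeg_iso {W : Type*} {G : SimpleGraph V} {H : SimpleGraph W} (e : G ≃g H) (v : V) :
    gdeg H (e v) = gdeg G v := by
  unfold gdeg
  rw [← Set.ncard_image_of_injective _ e.injective]
  congr 1
  ext w
  obtain ⟨w, rfl⟩ := e.surjective w
  simpa using e.map_adj_iff

lemma mp_iso_le {W : Type*} [Fintype W] {G : SimpleGraph V} {H : SimpleGraph W} (e : G ≃g H) :
    mp G ≤ mp H := by
  refine mp_le fun l hl hc => ?_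
  rw [← List.length_map (f := e)]
  refine le_mp (hl.map e.injective) ((List.isChain_map _).2 (hc.imp fun x y h => ?_))
  exact ⟨e.map_adj_iff.2 h.1, by rw [gdeg_iso, gdeg_iso]; exact h.2⟩

lemma kSaturated_comap {W : Type*} [Fintype V] [Fintype W] (e : V ≃ W) {H : SimpleGraph W} {k : ℕ}
    (h : KSaturated k H) : KSaturated k (H.comap e) := by
  refine ⟨(mp_iso_le (Iso.comap e H)).trans_lt h.1, fun u v huv hadj => ?_⟩
  refine (h.2 (e u) (e v) (e.injective.ne huv) hadj).trans (mp_iso_le (Iso.symm ⟨e, ?_⟩))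
  intro a b
  simp [addEdge]

lemma le_addEdge (G : SimpleGraph V) (u v : V) : G ≤ addEdge G u v := le_sup_left

lemma addEdge_comm (G : SimpleGraph V) (u v : V) : addEdge G u v = addEdge G v u := by
  rw [addEdge, addEdge, Sym2.eq_swap]

lemma addEdge_adj {G : SimpleGraph V} {u v x y : V} :
    (addEdge G u v).Adj x y ↔ G.Adj x y ∨ ((x = u ∧ y = v ∨ x = v ∧ y = u) ∧ x ≠ y) := by
  simp [addEdge]

lemma gdeg_addEdge [Finite V] {G : SimpleGraph V} {u v : V} (huv : u ≠ v) (h : ¬ G.Adj u v)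
    (w : V) [Decidable (w = u ∨ w = v)] :
    gdeg (addEdge G u v) w = gdeg G w + if w = u ∨ w = v then 1 else 0 := by
  unfold gdeg
  split_ifs with hw
  · rcases hw with rfl | rfl
    · rw [← Set.ncard_insert_of_notMem (a := v) (by simpa using h) (Set.toFinite _)]
      congr 1
      ext x
      simp only [mem_neighborSet, addEdge_adj, Set.mem_insert_iff]
      grind
    · rw [← Set.ncard_insert_of_notMem (a := u) (by simpa [G.adj_comm] using h) (Set.toFinite _)]
      congr 1
      ext x
      simp only [mem_neighborSet, addEdge_adj, Set.mem_insert_iff]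
      grind
  · rw [add_zero]
    congr 1
    ext x
    simp only [mem_neighborSet, addEdge_adj]
    grind

/-! ### The extremal graph -/

/-- The disjoint union of `t` blocks, each made of three copies (layers) of the complete graph on
`m` vertices. The vertex `(a, s, i)` is the `i`-th vertex of layer `s` of block `a`. Layer `0` of
each block is its centre, and is joined by a perfect matching to each of the two outer layers. -/
def blocks (t m : ℕ) : SimpleGraph (Fin t × Fin 3 × Fin m) where
  Adj x y := x.1 = y.1 ∧ ((x.2.1 = y.2.1 ∧ x.2.2 ≠ y.2.2) ∨
    (x.2.1 ≠ y.2.1 ∧ (x.2.1 = 0 ∨ y.2.1 = 0) ∧ x.2.2 = y.2.2))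
  symm := ⟨by grind⟩
  loopless := ⟨by grind⟩

variable {t m : ℕ}

lemma blocks_adj {a b : Fin t} {r s : Fin 3} {i j : Fin m} :
    (blocks t m).Adj (a, r, i) (b, s, j) ↔
      a = b ∧ ((r = s ∧ i ≠ j) ∨ (r ≠ s ∧ (r = 0 ∨ s = 0) ∧ i = j)) := Iff.rfl

lemma gdeg_blocks (a : Fin t) (s : Fin 3) (i : Fin m) :
    gdeg (blocks t m) (a, s, i) = if s = 0 then m + 1 else m := by
  classical
  have hset : (blocks t m).neighborSet (a, s, i) =
      (((Finset.univ.erase i).image fun j => (a, s, j)) ∪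
        ((Finset.univ.filter fun r => r ≠ s ∧ (s = 0 ∨ r = 0)).image fun r => (a, r, i)) :
        Finset (Fin t × Fin 3 × Fin m)) := by
    ext ⟨b, r, j⟩
    simp only [mem_neighborSet, blocks_adj, Finset.coe_union, Set.mem_union, Finset.mem_coe,
      Finset.mem_image, Finset.mem_erase, Finset.mem_filter, Finset.mem_univ, Prod.mk.injEq,
      true_and, and_true]
    constructor
    · rintro ⟨rfl, ⟨rfl, h⟩ | ⟨h, h', rfl⟩⟩
      · exact Or.inl ⟨j, Ne.symm h, rfl, rfl, rfl⟩
      · exact Or.inr ⟨r, ⟨Ne.symm h, h'⟩, rfl, rfl, rfl⟩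
    · rintro (⟨_, h, rfl, rfl, rfl⟩ | ⟨_, h, rfl, rfl, rfl⟩)
      · exact ⟨rfl, Or.inl ⟨rfl, Ne.symm h⟩⟩
      · exact ⟨rfl, Or.inr ⟨Ne.symm h.1, h.2, rfl⟩⟩
  have hm : 0 < m := i.pos
  have hcard : (Finset.univ.filter fun r : Fin 3 => r ≠ s ∧ (s = 0 ∨ r = 0)).card =
      if s = 0 then 2 else 1 := by
    clear hset; revert s; decide
  rw [gdeg, hset, Set.ncard_coe_finset, Finset.card_union_of_disjoint,
    Finset.card_image_of_injective _ (fun _ _ h => by simpa using h),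
    Finset.card_image_of_injective _ (fun _ _ h => by simpa using h), hcard,
    Finset.card_erase_of_mem (Finset.mem_univ _), Finset.card_univ, Fintype.card_fin]
  · split_ifs <;> omega
  · rw [Finset.disjoint_left]
    simp only [Finset.mem_image, Finset.mem_erase, Finset.mem_filter]
    grind

lemma ncard_edgeSet_blocks (t m : ℕ) :
    2 * (blocks t m).edgeSet.ncard = t * m * (3 * m + 1) := by
  classical
  have h := (blocks t m).sum_degrees_eq_twice_card_edges
  rw [← coe_edgeFinset, Set.ncard_coe_finset, ← h]
  have hd : ∀ x, (blocks t m).degree x = gdeg (blocks t m) x := fun x => by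
    rw [gdeg, ← card_neighborFinset_eq_degree, ← Set.ncard_coe_finset, coe_neighborFinset]
  simp only [hd, Fintype.sum_prod_type, gdeg_blocks, Fin.sum_univ_three]
  simp
  ring

/-- Along a non-decreasing path, once a vertex is in an outer layer all earlier vertices are in that
same layer; so the path stays within one centre and one outer layer. -/
lemma mp_blocks_le (t m : ℕ) : mp (blocks t m) ≤ 2 * m := by
  classical
  refine mp_le fun l hl hc => ?_
  let R : Fin t × Fin 3 × Fin m → Fin t × Fin 3 × Fin m → Prop :=
    fun x y => x.1 = y.1 ∧ (y.2.1 = 0 ∨ x.2.1 = y.2.1)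
  have : IsTrans _ R := ⟨by grind⟩
  have hR : l.IsChain R := hc.imp fun ⟨a, r, i⟩ ⟨b, s, j⟩ h => by
    obtain ⟨h1, h2⟩ := h
    rw [gdeg_blocks, gdeg_blocks] at h2
    rw [blocks_adj] at h1
    grind
  rw [List.isChain_iff_pairwise] at hR
  cases l with
  | nil => simp
  | cons x l =>
    have hsub : (x :: l).toFinset ⊆
        ((Finset.univ : Finset (Fin m)).image fun i => (x.1, (0 : Fin 3), i)) ∪
        ((Finset.univ : Finset (Fin m)).image fun i => (x.1, x.2.1, i)) := by
      intro y hy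
      have hxy : R x y := by
        rw [List.mem_toFinset, List.mem_cons] at hy
        rcases hy with rfl | hy
        · exact ⟨rfl, Or.inr rfl⟩
        · exact (List.pairwise_cons.1 hR).1 y hy
      obtain ⟨b, s, j⟩ := y
      simp only [Finset.mem_union, Finset.mem_image, Finset.mem_univ, true_and]
      grind
    rw [← List.toFinset_card_of_nodup hl]
    refine (Finset.card_le_card hsub).trans ((Finset.card_union_le _ _).trans ?_)
    refine (add_le_add Finset.card_image_le Finset.card_image_le).trans ?_
    simp [two_mul]

/-! ### Saturation -/

/-- Vertices of one layer may be visited in any order along which degrees do not decrease. -/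
lemma isChain_layer {H : SimpleGraph (Fin t × Fin 3 × Fin m)} (hH : blocks t m ≤ H)
    (a : Fin t) (s : Fin 3) {l : List (Fin m)} (hl : l.Nodup)
    (hdeg : l.Pairwise fun i j => gdeg H (a, s, i) ≤ gdeg H (a, s, j)) :
    (l.map fun i => (a, s, i)).IsChain (Step H) := by
  rw [List.isChain_map]
  refine (List.Pairwise.and hl hdeg).isChain.imp fun i j h => ⟨hH ?_, h.2⟩
  exact blocks_adj.2 ⟨rfl, Or.inl ⟨rfl, h.1⟩⟩

/-- A path running through layer `s` in the order `p ++ l`, along the matching edge at the last index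
of `l`, and then through layer `r` of the same block in the reverse order of `l`. -/
lemma isChain_zigzag {H : SimpleGraph (Fin t × Fin 3 × Fin m)} (hH : blocks t m ≤ H)
    (a : Fin t) {s r : Fin 3} (hsr : s ≠ r) (h0 : s = 0 ∨ r = 0) {p l : List (Fin m)}
    (hp : (p ++ l).Nodup)
    (hs : (p ++ l).Pairwise fun i j => gdeg H (a, s, i) ≤ gdeg H (a, s, j))
    (hr : l.reverse.Pairwise fun i j => gdeg H (a, r, i) ≤ gdeg H (a, r, j))
    (hsr' : ∀ i ∈ l, gdeg H (a, s, i) ≤ gdeg H (a, r, i)) :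
    ((p ++ l).map (fun i => (a, s, i)) ++ l.reverse.map fun i => (a, r, i)).IsChain (Step H) := by
  refine List.isChain_append.2 ⟨isChain_layer hH a s hp hs,
    isChain_layer hH a r (List.nodup_reverse.2 hp.of_append_right) hr, ?_⟩
  rcases List.eq_nil_or_concat l with rfl | ⟨l', i, rfl⟩
  · simp
  · have := hsr' i (by simp)
    simp only [List.concat_eq_append, ← List.append_assoc, List.map_append, List.getLast?_append,
      List.reverse_append]
    simp [Step, this]
    exact hH (blocks_adj.2 ⟨rfl, Or.inr ⟨hsr, h0, rfl⟩⟩)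

/-- There is an enumeration of all indices that starts with `i`. -/
lemma exists_list (i : Fin m) : ∃ l : List (Fin m), (i :: l).Nodup ∧ (i :: l).length = m := by
  refine ⟨(Finset.univ.erase i).toList, ?_, ?_⟩
  · simp [Finset.nodup_toList]
  · have := i.pos
    simp
    omega


lemma gdeg_addEdge_blocks {u v : Fin t × Fin 3 × Fin m} (huv : u ≠ v)
    (h : ¬ (blocks t m).Adj u v) (a : Fin t) (s : Fin 3) (i : Fin m) :
    gdeg (addEdge (blocks t m) u v) (a, s, i) =
      (if s = 0 then m + 1 else m) + if (a, s, i) = u ∨ (a, s, i) = v then 1 else 0 := by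
  rw [gdeg_addEdge huv h, gdeg_blocks]

/-- A new edge between two centres extends a path exhausting an outer layer and then the centre of
one of the two blocks. -/
lemma le_mp_center {a b : Fin t} (hab : a ≠ b) (i j : Fin m) :
    2 * m + 1 ≤ mp (addEdge (blocks t m) (a, 0, i) (b, 0, j)) := by
  obtain ⟨l, hl, hlen⟩ := exists_list i
  have hd := gdeg_addEdge_blocks (u := (a, 0, i)) (v := (b, 0, j)) (by simp [hab])
    (by simp [blocks_adj, hab])
  have hle := le_addEdge (blocks t m) (a, 0, i) (b, 0, j)
  have hadj : (addEdge (blocks t m) (a, 0, i) (b, 0, j)).Adj (a, 0, i) (b, 0, j) := by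
    simp [addEdge_adj, hab]
  generalize addEdge (blocks t m) (a, 0, i) (b, 0, j) = H at *
  have hz := isChain_zigzag hle a (s := 1) (r := 0) (by decide) (by decide) (p := []) (l := i :: l)
    hl (by simp [hd, List.pairwise_iff_forall_sublist]) (by
      simp only [List.reverse_cons, List.pairwise_append, hd]
      refine ⟨List.pairwise_of_forall_mem_list fun x hx y hy => ?_, by simp, ?_⟩ <;> grind)
    (by simp [hd]; grind)
  refine le_trans ?_ (le_mp (l := (([] ++ i :: l).map (fun i => (a, (1 : Fin 3), i)) ++
    (i :: l).reverse.map fun i => (a, (0 : Fin 3), i)) ++ [(b, 0, j)]) ?_ ?_)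
  · simp at hlen ⊢
    omega
  · simp only [List.nodup_append, List.nil_append]
    refine ⟨⟨hl.map fun _ _ => by simp, (List.nodup_reverse.2 hl).map fun _ _ => by simp, ?_⟩,
      by simp, ?_⟩ <;> simp <;> grind
  · refine List.isChain_append.2 ⟨hz, by simp, ?_⟩
    rw [List.reverse_cons, List.map_append (l₁ := l.reverse), ← List.append_assoc,
      List.map_singleton, List.getLast?_concat]
    simp [Step, hd, hadj]

/-- The edge joins `u = (a, s, i)`, in an outer layer, to a vertex `v` outside the other outer layer
`r` of the block of `u`. The path visits layer `r` in the order `p ++ i :: l`, passes to the centre,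
visits there the vertices listed in `i :: l`, leaves through the partner of `u`, and ends with
`u, v`. -/
lemma le_mp_outer {a : Fin t} {s r : Fin 3} (hs : s ≠ 0) (hr : r ≠ 0) (hsr : s ≠ r) {i : Fin m}
    {v : Fin t × Fin 3 × Fin m} (huv : (a, s, i) ≠ v) (hadj : ¬ (blocks t m).Adj (a, s, i) v)
    (hvr : ∀ x, v ≠ (a, r, x)) {p l : List (Fin m)} (hl : (p ++ i :: l).Nodup)
    (hlen : 2 * m + 1 ≤ (p ++ i :: l).length + (i :: l).length + 2)
    (hvl : ∀ x ∈ i :: l, v ≠ (a, 0, x)) :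
    2 * m + 1 ≤ mp (addEdge (blocks t m) (a, s, i) v) := by
  have hd := gdeg_addEdge_blocks huv hadj
  have hle := le_addEdge (blocks t m) (a, s, i) v
  have hadj : (addEdge (blocks t m) (a, s, i) v).Adj (a, s, i) v := by
    simp [addEdge_adj, huv]
  generalize addEdge (blocks t m) (a, s, i) v = H at *
  have hdr : ∀ x, gdeg H (a, r, x) = m := by grind
  have hd0 : ∀ x ∈ i :: l, gdeg H (a, 0, x) = m + 1 := by grind
  have hdu : gdeg H (a, s, i) = m + 1 := by grind
  have hdv : m + 1 ≤ gdeg H v := by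
    obtain ⟨b, q, j⟩ := v
    grind
  have hz := isChain_zigzag hle a (s := r) (r := 0) hr (Or.inr rfl) hl
    (List.pairwise_of_forall_mem_list (by simp [hdr]))
    (List.pairwise_of_forall_mem_list fun x hx y hy => by
      rw [hd0 x (List.mem_reverse.1 hx), hd0 y (List.mem_reverse.1 hy)])
    (fun x hx => by rw [hd0 x hx, hdr]; omega)
  refine le_trans ?_ (le_mp (l := ((p ++ i :: l).map (fun i => (a, r, i)) ++
    (i :: l).reverse.map fun i => (a, (0 : Fin 3), i)) ++ [(a, s, i), v]) ?_ ?_)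
  · simp at hlen ⊢
    omega
  · rw [List.nodup_append, List.nodup_append]
    refine ⟨⟨hl.map fun _ _ => by simp,
      (List.nodup_reverse.2 hl.of_append_right).map fun _ _ => by simp, ?_⟩, by simp [huv], ?_⟩
    · simp only [List.mem_map]
      grind
    · simp only [List.mem_map, List.mem_append, List.mem_reverse]
      grind
  · refine List.isChain_append.2 ⟨hz, ?_, ?_⟩
    · simp [Step, hdu, hdv, hadj]
    · have : (blocks t m).Adj (a, 0, i) (a, s, i) :=
        blocks_adj.2 ⟨rfl, Or.inr ⟨hs.symm, Or.inl rfl, rfl⟩⟩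
      rw [List.reverse_cons, List.map_append (l₁ := l.reverse), ← List.append_assoc,
        List.map_singleton, List.getLast?_concat]
      simp [Step, hd0, hdu, hle this]

/-- For an edge between the two outer layers of one block, the path exhausts the layer of `u`,
crosses the new edge, and then exhausts the centre. -/
lemma le_mp_same_block (a : Fin t) {s r : Fin 3} (hs : s ≠ 0) (hr : r ≠ 0) (hsr : s ≠ r)
    (i j : Fin m) : 2 * m + 1 ≤ mp (addEdge (blocks t m) (a, s, i) (a, r, j)) := by
  obtain ⟨l, hl, hlen⟩ := exists_list i
  obtain ⟨l', hl', hlen'⟩ := exists_list j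
  have huv : (a, s, i) ≠ (a, r, j) := by simp [hsr]
  have hd := gdeg_addEdge_blocks huv (by simp [blocks_adj, hsr, hs, hr])
  have hle := le_addEdge (blocks t m) (a, s, i) (a, r, j)
  have hadj : (addEdge (blocks t m) (a, s, i) (a, r, j)).Adj (a, s, i) (a, r, j) := by
    simp [addEdge_adj, hsr]
  generalize addEdge (blocks t m) (a, s, i) (a, r, j) = H at *
  have hd0 : ∀ x, gdeg H (a, 0, x) = m + 1 := by grind
  have hdv : gdeg H (a, r, j) = m + 1 := by grind
  have hdu : gdeg H (a, s, i) = m + 1 := by grind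
  have hds : ∀ x ∈ l, gdeg H (a, s, x) = m := by grind
  have h1 := isChain_layer hle a s (List.nodup_reverse.2 hl) (by
      simp only [List.reverse_cons, List.pairwise_append]
      refine ⟨List.pairwise_of_forall_mem_list fun x hx y hy => ?_, by simp, ?_⟩ <;> grind)
  have h2 := isChain_layer hle a 0 hl' (List.pairwise_of_forall_mem_list (by simp [hd0]))
  refine le_trans ?_ (le_mp (l := ((i :: l).reverse.map fun i => (a, s, i)) ++
    ((a, r, j) :: (j :: l').map fun i => (a, (0 : Fin 3), i))) ?_ ?_)
  · simp at hlen hlen' ⊢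
    omega
  · rw [List.nodup_append, List.nodup_cons]
    refine ⟨(List.nodup_reverse.2 hl).map fun _ _ => by simp,
      ⟨by simp [hr, hr.symm], hl'.map fun _ _ => by simp⟩, ?_⟩
    simp only [List.mem_map, List.mem_cons]
    grind
  · refine List.isChain_append.2 ⟨h1, ?_, ?_⟩
    · have : (blocks t m).Adj (a, r, j) (a, 0, j) :=
        blocks_adj.2 ⟨rfl, Or.inr ⟨hr, Or.inr rfl, rfl⟩⟩
      rw [List.map_cons] at h2 ⊢
      exact List.isChain_cons_cons.2 ⟨⟨hle this, by rw [hdv, hd0]⟩, h2⟩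
    · simp [Step, hdu, hdv, hadj]

/-- All cases of an added edge with at least one end in an outer layer. -/
lemma le_mp_of_ne_zero {a : Fin t} {s : Fin 3} (hs : s ≠ 0) {i : Fin m}
    {v : Fin t × Fin 3 × Fin m} (huv : (a, s, i) ≠ v) (hadj : ¬ (blocks t m).Adj (a, s, i) v) :
    2 * m + 1 ≤ mp (addEdge (blocks t m) (a, s, i) v) := by
  obtain ⟨r, hr, hsr⟩ : ∃ r : Fin 3, r ≠ 0 ∧ s ≠ r := by
    clear huv hadj; revert s; decide
  obtain ⟨b, q, j⟩ := v
  obtain ⟨l, hl, hlen⟩ := exists_list i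
  rcases ne_or_eq a b with hab | rfl
  · refine le_mp_outer hs hr hsr huv hadj (by simp [hab.symm]) (p := []) hl ?_ (by simp [hab.symm])
    simp at hlen ⊢
    omega
  have hsq : s ≠ q := by
    rintro rfl
    rw [blocks_adj] at hadj
    grind
  rcases eq_or_ne q 0 with rfl | hq
  · have hij : i ≠ j := by
      rintro rfl
      exact hadj (blocks_adj.2 ⟨rfl, Or.inr ⟨hsq, Or.inr rfl, rfl⟩⟩)
    have hjl : j ∈ i :: l := by
      have : (i :: l).toFinset = Finset.univ := by
        rw [← Finset.card_eq_iff_eq_univ, List.toFinset_card_of_nodup hl, hlen, Fintype.card_fin]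
      rw [← List.mem_toFinset, this]
      exact Finset.mem_univ j
    have hjl : j ∈ l := by grind
    -- The central vertex `v` comes last on the path, so the middle part of the path omits it and
    -- the vertex of layer `r` matched to it is visited first.
    refine le_mp_outer hs hr hsr huv hadj (by simp [hr.symm]) (p := [j]) (l := l.erase j) ?_ ?_ ?_
    · have := hl.of_cons
      have := this.erase j
      have := hl.of_cons.not_mem_erase (a := j)
      grind
    · have := List.length_erase_of_mem hjl
      have := List.length_pos_of_mem hjl
      simp at hlen ⊢
      omega
    · have := hl.of_cons.not_mem_erase (a := j)
      grind
  · exact le_mp_same_block a hs hq hsq i j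

lemma kSaturated_blocks (t m : ℕ) : KSaturated (2 * m + 1) (blocks t m) := by
  refine ⟨Nat.lt_succ_of_le (mp_blocks_le t m), ?_⟩
  rintro ⟨a, s, i⟩ ⟨b, r, j⟩ huv hadj
  rcases ne_or_eq s 0 with hs | rfl
  · exact le_mp_of_ne_zero hs huv hadj
  rcases ne_or_eq r 0 with hr | rfl
  · rw [addEdge_comm]
    exact le_mp_of_ne_zero hr huv.symm fun h => hadj h.symm
  · refine le_mp_center ?_ i j
    rintro rfl
    rw [blocks_adj] at hadj
    grind

theorem stmt_8 (k n : ℕ) (hk : 3 ≤ k) (hodd : Odd k) (hn : 0 < n)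
    (hmod : (3 * (k - 1) / 2) ∣ n) :
    hSat n k ≤ n * (3 * k - 1) / 12 := by
  obtain ⟨m, rfl⟩ := hodd
  obtain ⟨t, rfl⟩ := hmod
  have h3 : 3 * (2 * m + 1 - 1) / 2 = 3 * m := by omega
  rw [h3]
  let e : Fin (3 * m * t) ≃ Fin t × Fin 3 × Fin m :=
    Fintype.equivOfCardEq (by simp; ring)
  refine ((Nat.sInf_le ⟨(blocks t m).comap e, kSaturated_comap e (kSaturated_blocks t m),
    rfl⟩) : hSat _ _ ≤ ((blocks t m).comap e).edgeSet.ncard).trans ?_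
  have hE : ((blocks t m).comap e).edgeSet.ncard = (blocks t m).edgeSet.ncard :=
    Nat.card_congr (Iso.comap e (blocks t m)).mapEdgeSet
  have h2 := ncard_edgeSet_blocks t m
  have h4 : 3 * (2 * m + 1) - 1 = 2 * (3 * m + 1) := by omega
  rw [hE, h4, Nat.le_div_iff_mul_le (by norm_num)]
  nlinarith
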